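/- The schemes ALLdistr, modalD (∀x¬φ → ¬∀xφ), modal4 (∀xφ → ∀x∀xφ), modal5, vacGen, denot, subst, and genEq are all supertrue. -/

import Mathlib

set_option autoImplicit false

/-! ## Megill-style scheme-level formalization of first-order logic -/

/-- Metavariables: variable metavariables `vr i` (standing for x_i) and
formula metavariables `fm i` (standing for φ_i). -/
inductive MV : Type
  | vr (i : ℕ) : MV
  | fm (i : ℕ) : MV
  deriving DecidableEq

/-- Metaformulas over the pure language of equality. -/
inductive MF : Type
  | phi (i : ℕ) : MF
  | eq (i j : ℕ) : MF
  | imp (a b : MF) : MF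
  | not (a : MF) : MF
  | all (i : ℕ) (a : MF) : MF
  deriving DecidableEq

/-- The set of metavariables occurring in a metaformula. -/
def MF.OC : MF → Set MV
  | .phi i => {MV.fm i}
  | .eq i j => {MV.vr i, MV.vr j}
  | .imp a b => a.OC ∪ b.OC
  | .not a => a.OC
  | .all i a => insert (MV.vr i) a.OC

/-- A scheme: finitely many hypotheses, a conclusion, and disjoint-variable
(DV) conditions given as unordered pairs of metavariables. -/
structure Scheme : Type where
  hyps : Finset MF
  concl : MF
  dv : Set (Sym2 MV)

/-- Metavariables occurring in a scheme (in its hypotheses or conclusion). -/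
def Scheme.OC (Φ : Scheme) : Set MV :=
  {m | ∃ h ∈ Φ.hyps, m ∈ h.OC} ∪ Φ.concl.OC

/-- A (type-preserving) substitution: variable metavariables go to variable
metavariables, formula metavariables go to metaformulas; it is the identity
outside a finite set. -/
structure Subst : Type where
  vr : ℕ → ℕ
  fm : ℕ → MF
  finVr : {i : ℕ | vr i ≠ i}.Finite
  finFm : {i : ℕ | fm i ≠ MF.phi i}.Finite

/-- Action of a substitution on a metaformula. -/
def MF.substMF (σ : Subst) : MF → MF
  | .phi i => σ.fm i
  | .eq i j => .eq (σ.vr i) (σ.vr j)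
  | .imp a b => .imp (a.substMF σ) (b.substMF σ)
  | .not a => .not (a.substMF σ)
  | .all i a => .all (σ.vr i) (a.substMF σ)

/-- The set of metavariables occurring in the image of a metavariable. -/
def Subst.appMV (σ : Subst) : MV → Set MV
  | .vr i => {MV.vr (σ.vr i)}
  | .fm i => (σ.fm i).OC

/-- σ is the identity on a given metavariable. -/
def Subst.Fixes (σ : Subst) : MV → Prop
  | .vr i => σ.vr i = i
  | .fm i => σ.fm i = MF.phi i

/-- A substitution is legitimate on a scheme if it does not violate its
DV conditions. -/
def Subst.Legit (σ : Subst) (Φ : Scheme) : Prop :=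
  ∀ m n : MV, s(m, n) ∈ Φ.dv → σ.appMV m ∩ σ.appMV n = ∅

/-- Propagation of DV conditions along a substitution. -/
def Subst.dvMap (σ : Subst) (D : Set (Sym2 MV)) : Set (Sym2 MV) :=
  {q | ∃ m' n' m n : MV, s(m', n') ∈ D ∧ m ∈ σ.appMV m' ∧ n ∈ σ.appMV n' ∧ q = s(m, n)}

/-- Action of a substitution on a scheme. -/
def Scheme.substS (Φ : Scheme) (σ : Subst) : Scheme :=
  ⟨Φ.hyps.image (MF.substMF σ), Φ.concl.substMF σ, σ.dvMap Φ.dv⟩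

/-- `Φ.Inst Ψ` : Ψ is an instance of Φ, i.e. the result of a legitimate
substitution, possibly followed by the addition of DV conditions. -/
def Scheme.Inst (Φ Ψ : Scheme) : Prop :=
  ∃ σ : Subst, σ.Legit Φ ∧ Ψ.hyps = Φ.hyps.image (MF.substMF σ) ∧
    Ψ.concl = Φ.concl.substMF σ ∧ σ.dvMap Φ.dv ⊆ Ψ.dv

/-- Metavariables occurring in a list of metaformulas. -/
def listOC (P : List MF) : Set MV := {m | ∃ f ∈ P, m ∈ f.OC}

/-- The DV conditions of a proof `P` of the scheme `Φ`: those of `Φ`, plus all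
pairs {m, n} where m is a dummy metavariable of `P` and n occurs in `P`. -/
def proofDV (Φ : Scheme) (P : List MF) : Set (Sym2 MV) :=
  Φ.dv ∪ {q | ∃ m n : MV, m ∈ listOC P ∧ m ∉ Φ.OC ∧ n ∈ listOC P ∧ q = s(m, n)}

/-- `P` is a proof of the scheme `Φ` from the set `S` of schemes. -/
def IsProof (S : Set Scheme) (Φ : Scheme) (P : List MF) : Prop :=
  P ≠ [] ∧ P.getLast? = some Φ.concl ∧
  ∀ (k : ℕ) (hk : k < P.length),
    P.get ⟨k, hk⟩ ∈ Φ.hyps ∨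
    ∃ hs : Finset MF,
      (∀ h ∈ hs, ∃ (l : ℕ) (hl : l < k), P.get ⟨l, hl.trans hk⟩ = h) ∧
      ∃ Ξ ∈ S, Ξ.Inst ⟨hs, P.get ⟨k, hk⟩, proofDV Φ P⟩

/-- `S ⊢ Φ` : the scheme `Φ` is provable from the set `S` of schemes. -/
def Provable (S : Set Scheme) (Φ : Scheme) : Prop := ∃ P : List MF, IsProof S Φ P

/-! ## Object level: first-order formulas and semantics -/

/-- First-order formulas over the pure language of equality, with
individual variables v_i. -/
inductive FM : Type
  | eq (i j : ℕ) : FM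
  | imp (a b : FM) : FM
  | not (a : FM) : FM
  | all (i : ℕ) (a : FM) : FM
  deriving DecidableEq

/-- Variables occurring in a first-order formula. -/
def FM.vars : FM → Set ℕ
  | .eq i j => {i, j}
  | .imp a b => a.vars ∪ b.vars
  | .not a => a.vars
  | .all i a => insert i a.vars

/-- An object-substitution: variable metavariables go to individual variables,
formula metavariables go to first-order formulas. -/
structure OSubst : Type where
  vr : ℕ → ℕ
  fm : ℕ → FM

/-- Action of an object-substitution on a metaformula, yielding a first-order
formula (an object-instance). -/
def MF.osubst (τ : OSubst) : MF → FM
  | .phi i => τ.fm i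
  | .eq i j => .eq (τ.vr i) (τ.vr j)
  | .imp a b => .imp (a.osubst τ) (b.osubst τ)
  | .not a => .not (a.osubst τ)
  | .all i a => .all (τ.vr i) (a.osubst τ)

/-- Variables occurring in the image of a metavariable. -/
def OSubst.appVars (τ : OSubst) : MV → Set ℕ
  | .vr i => {τ.vr i}
  | .fm i => (τ.fm i).vars

/-- An object-substitution is legitimate on a scheme if images of DV-paired
metavariables share no variables. -/
def OSubst.Legit (τ : OSubst) (Φ : Scheme) : Prop :=
  ∀ m n : MV, s(m, n) ∈ Φ.dv → τ.appVars m ∩ τ.appVars n = ∅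

/-- Evaluation of a first-order formula in a structure with domain `D`
(equality interpreted as equality) under an assignment `ρ`. -/
def FM.eval {D : Type} (ρ : ℕ → D) : FM → Prop
  | .eq i j => ρ i = ρ j
  | .imp a b => a.eval ρ → b.eval ρ
  | .not a => ¬ a.eval ρ
  | .all i a => ∀ d : D, a.eval (Function.update ρ i d)

/-- Validity of a first-order formula in the structure with domain `D`. -/
def FM.Valid (D : Type) (f : FM) : Prop := ∀ ρ : ℕ → D, f.eval ρ

/-- A scheme is true if for every legitimate object-instance and every
nonempty domain, the conclusion is valid whenever all hypotheses are. -/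
def Scheme.IsTrue (Φ : Scheme) : Prop :=
  ∀ τ : OSubst, τ.Legit Φ →
    ∀ D : Type, Nonempty D →
      (∀ h ∈ Φ.hyps, FM.Valid D (h.osubst τ)) → FM.Valid D (Φ.concl.osubst τ)

/-! ## (i,j)-transforms and supertruth -/

/-- Auxiliary: (i,j)-transform with a flag recording whether we are inside the
scope of a quantifier ∀x_i. -/
def MF.transfAux (i j : ℕ) : MF → Bool → MF
  | .phi k, _ => .phi k
  | .eq a b, ins =>
      .eq (if ins = true ∧ a = j then i else a) (if ins = true ∧ b = j then i else b)
  | .imp a b, ins => .imp (a.transfAux i j ins) (b.transfAux i j ins)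
  | .not a, ins => .not (a.transfAux i j ins)
  | .all k a, ins =>
      .all (if ins = true ∧ k = j then i else k) (a.transfAux i j (ins || decide (k = i)))

/-- The (i,j)-transform of a metaformula: replace every occurrence of x_j
lying within the scope of a quantifier ∀x_i by x_i. -/
def MF.transform (i j : ℕ) (f : MF) : MF := f.transfAux i j false

/-- The (i,j)-transform of a scheme: transform hypotheses and conclusion,
keep the DV conditions. -/
def Scheme.transform (i j : ℕ) (Φ : Scheme) : Scheme :=
  ⟨Φ.hyps.image (MF.transform i j), Φ.concl.transform i j, Φ.dv⟩

/-- The (i,j)-transform (and the {i,j}-transform) is legitimate on a scheme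
if {x_i, x_j} is not among its DV conditions. -/
def Scheme.TLegit (i j : ℕ) (Φ : Scheme) : Prop := s(MV.vr i, MV.vr j) ∉ Φ.dv

/-- A (hypothesis-free) scheme is presupertrue if all the legitimate
(i,j)-transforms of all its instances (including itself) are true. -/
def Scheme.PreST (Φ : Scheme) : Prop :=
  ∀ Ψ : Scheme, (Ψ = Φ ∨ Φ.Inst Ψ) → ∀ i j : ℕ, Ψ.TLegit i j → (Ψ.transform i j).IsTrue

/-- A scheme is supertrue if every instance of it (including itself) satisfies:
whenever all legitimate (i,j)-transforms of all instances of each of its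
hypotheses (taken as hypothesis-free schemes with the inherited DV conditions)
are true, all legitimate (i,j)-transforms of all instances of its conclusion
are true. -/
def Scheme.Supertrue (Φ : Scheme) : Prop :=
  ∀ Ψ : Scheme, (Ψ = Φ ∨ Φ.Inst Ψ) →
    (∀ h ∈ Ψ.hyps, Scheme.PreST ⟨∅, h, Ψ.dv⟩) → Scheme.PreST ⟨∅, Ψ.concl, Ψ.dv⟩

/-- The {i,j}-transform of a metaformula: the composite of the (i,j)-transform
and the (j,i)-transform, the one with smaller first index performed first. -/
def MF.stransform (i j : ℕ) (f : MF) : MF :=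
  if i ≤ j then (f.transform i j).transform j i else (f.transform j i).transform i j

/-- The {i,j}-transform of a scheme. -/
def Scheme.stransform (i j : ℕ) (Φ : Scheme) : Scheme :=
  ⟨Φ.hyps.image (MF.stransform i j), Φ.concl.stransform i j, Φ.dv⟩

/-- A metaformula contains no formula metavariables. -/
def MF.FmFree : MF → Prop
  | .phi _ => False
  | .eq _ _ => True
  | .imp a b => a.FmFree ∧ b.FmFree
  | .not a => a.FmFree
  | .all _ a => a.FmFree

/-- A scheme contains no formula metavariables. -/
def Scheme.FmFree (Φ : Scheme) : Prop := (∀ h ∈ Φ.hyps, h.FmFree) ∧ Φ.concl.FmFree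

/-- A (hypothesis-free) scheme is pre-semisupertrue if all the legitimate
{i,j}-transforms of all its instances (including itself) are true. -/
def Scheme.PreSST (Φ : Scheme) : Prop :=
  ∀ Ψ : Scheme, (Ψ = Φ ∨ Φ.Inst Ψ) → ∀ i j : ℕ, Ψ.TLegit i j → (Ψ.stransform i j).IsTrue

/-- A scheme is semisupertrue if it is true and every formula-metavariable-free
instance of it satisfies: whenever all legitimate {i,j}-transforms of all
instances of each of its hypotheses are true, all legitimate {i,j}-transforms
of all instances of its conclusion are true. -/
def Scheme.Semisupertrue (Φ : Scheme) : Prop :=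
  Φ.IsTrue ∧
  ∀ Ψ : Scheme, (Ψ = Φ ∨ Φ.Inst Ψ) → Ψ.FmFree →
    (∀ h ∈ Ψ.hyps, Scheme.PreSST ⟨∅, h, Ψ.dv⟩) → Scheme.PreSST ⟨∅, Ψ.concl, Ψ.dv⟩

/-- A metaformula is quantifier-free. -/
def MF.QFree : MF → Prop
  | .phi _ => True
  | .eq _ _ => True
  | .imp a b => a.QFree ∧ b.QFree
  | .not a => a.QFree
  | .all _ _ => False

/-- A scheme is quantifier-free. -/
def Scheme.QFree (Φ : Scheme) : Prop := (∀ h ∈ Φ.hyps, h.QFree) ∧ Φ.concl.QFree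

/-! ## The axiom schemes of the system TMM
(x = x_0, y = x_1, z = x_2; φ = φ_0, ψ = φ_1, χ = φ_2, θ = φ_3, τ = φ_4) -/

def ax_mp : Scheme := ⟨{.phi 0, .imp (.phi 0) (.phi 1)}, .phi 1, ∅⟩

def ax_minimp : Scheme :=
  ⟨∅, .imp (.phi 0) (.imp (.imp (.phi 1) (.phi 2))
      (.imp (.imp (.imp (.phi 3) (.phi 1)) (.imp (.phi 2) (.phi 4)))
        (.imp (.phi 1) (.phi 4)))), ∅⟩

def ax_peirce : Scheme := ⟨∅, .imp (.imp (.imp (.phi 0) (.phi 1)) (.phi 0)) (.phi 0), ∅⟩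

def ax_contrap : Scheme :=
  ⟨∅, .imp (.imp (.phi 0) (.not (.phi 1))) (.imp (.phi 1) (.not (.phi 0))), ∅⟩

def ax_notelim : Scheme := ⟨∅, .imp (.not (.phi 0)) (.imp (.phi 0) (.phi 1)), ∅⟩

def ax_gen : Scheme := ⟨{.phi 0}, .all 0 (.phi 0), ∅⟩

def ax_ALLdistr : Scheme :=
  ⟨∅, .imp (.all 0 (.imp (.phi 0) (.phi 1))) (.imp (.all 0 (.phi 0)) (.all 0 (.phi 1))), ∅⟩

def ax_spec : Scheme := ⟨∅, .imp (.all 0 (.phi 0)) (.phi 0), ∅⟩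

def ax_modal5 : Scheme :=
  ⟨∅, .imp (.not (.all 0 (.phi 0))) (.all 0 (.not (.all 0 (.phi 0)))), ∅⟩

def ax_vacGen : Scheme := ⟨∅, .imp (.phi 0) (.all 0 (.phi 0)), {s(MV.vr 0, MV.fm 0)}⟩

def ax_ALLcomm : Scheme :=
  ⟨∅, .imp (.all 0 (.all 1 (.phi 0))) (.all 1 (.all 0 (.phi 0))), ∅⟩

def ax_EQrefl : Scheme := ⟨∅, .eq 0 0, ∅⟩

def ax_EQsymm : Scheme := ⟨∅, .imp (.eq 0 1) (.eq 1 0), ∅⟩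

def ax_EQtrans : Scheme := ⟨∅, .imp (.eq 0 1) (.imp (.eq 1 2) (.eq 0 2)), ∅⟩

def ax_denot : Scheme :=
  ⟨∅, .imp (.eq 0 0) (.not (.all 1 (.not (.eq 1 0)))), {s(MV.vr 0, MV.vr 1)}⟩

def ax_subst : Scheme :=
  ⟨∅, .all 0 (.imp (.eq 0 1) (.imp (.phi 0) (.all 0 (.imp (.eq 0 1) (.phi 0))))),
    {s(MV.vr 0, MV.vr 1), s(MV.vr 1, MV.fm 0)}⟩

def ax_ALLeq : Scheme :=
  ⟨∅, .imp (.all 0 (.eq 0 1)) (.imp (.all 0 (.phi 0)) (.all 1 (.phi 0))), ∅⟩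

def ax_genEq : Scheme :=
  ⟨∅, .imp (.not (.all 0 (.eq 0 1)))
      (.imp (.not (.all 0 (.eq 0 2))) (.imp (.eq 1 2) (.all 0 (.eq 1 2)))), ∅⟩

def ax_modalD : Scheme := ⟨∅, .imp (.all 0 (.not (.phi 0))) (.not (.all 0 (.phi 0))), ∅⟩

def ax_modal4 : Scheme := ⟨∅, .imp (.all 0 (.phi 0)) (.all 0 (.all 0 (.phi 0))), ∅⟩

/-- The system TMM. -/
def TMM : Set Scheme :=
  {ax_mp, ax_minimp, ax_peirce, ax_contrap, ax_notelim, ax_gen, ax_ALLdistr, ax_spec,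
   ax_modal5, ax_vacGen, ax_ALLcomm, ax_EQrefl, ax_EQsymm, ax_EQtrans, ax_denot,
   ax_subst, ax_ALLeq, ax_genEq}

/-- The subsystem T. -/
def Tsys : Set Scheme :=
  {ax_mp, ax_minimp, ax_peirce, ax_contrap, ax_notelim, ax_gen, ax_ALLdistr, ax_vacGen,
   ax_EQrefl, ax_EQsymm, ax_EQtrans, ax_denot}

/-!
Call a scheme uniformly scoped if, up to its DV conditions, every variable in the scope of a
quantifier `∀x` is `x` itself and every formula metavariable `φ` has a fixed set of variables whose
quantifiers govern all its occurrences. In an instance, a DV pair `{x, y}` with `x` sent to `x_i`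
forbids `y` to be sent to `x_j`, because the `(i, j)`-transform is legitimate. So that transform
renames no variable of the scheme, and it acts in the same way on all occurrences of the image of
`φ`: it turns instances into instances, and a true uniformly scoped scheme is supertrue. Of the
eight schemes only `genEq` is not uniformly scoped, but whenever the transform does rename one
of its variables, one of the antecedents of the resulting formula becomes `¬∀x x ≡ x`.
-/

/-! ### Substitutions and instances -/

theorem MF.OC_substMF (σ : Subst) (A : MF) : (A.substMF σ).OC = ⋃ m ∈ A.OC, σ.appMV m := by
  induction A with
  | phi k => simp [MF.substMF, MF.OC, Subst.appMV]
  | eq a b => simp only [MF.substMF, MF.OC, Subst.appMV, Set.biUnion_insert,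
      Set.biUnion_singleton, Set.singleton_union]
  | imp A B ihA ihB => simp only [MF.substMF, MF.OC, ihA, ihB, Set.biUnion_union]
  | not _ ih => exact ih
  | all x A ih => simp [MF.substMF, MF.OC, Subst.appMV, ih]

namespace Subst

/-- The identity substitution. -/
protected def id : Subst where
  vr i := i
  fm i := .phi i
  finVr := by simp
  finFm := by simp

/-- The composite substitution that applies `σ` first and `τ` second. -/
def comp (σ τ : Subst) : Subst where
  vr i := τ.vr (σ.vr i)
  fm i := (σ.fm i).substMF τ
  finVr := by
    refine (σ.finVr.union τ.finVr).subset fun i hi => ?_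
    by_contra! h
    simp_all
  finFm := by
    refine (σ.finFm.union τ.finFm).subset fun i hi => ?_
    by_contra! h
    simp_all [MF.substMF]

theorem appMV_id (m : MV) : Subst.id.appMV m = {m} := by
  cases m <;> rfl

theorem appMV_comp (σ τ : Subst) (m : MV) :
    (σ.comp τ).appMV m = ⋃ n ∈ σ.appMV m, τ.appMV n := by
  cases m with
  | vr i => simp [appMV, comp]
  | fm i => exact MF.OC_substMF τ (σ.fm i)

theorem mk_mem_dvMap {σ : Subst} {D : Set (Sym2 MV)} {m n m' n' : MV} (h : s(m, n) ∈ D)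
    (hm : m' ∈ σ.appMV m) (hn : n' ∈ σ.appMV n) : s(m', n') ∈ σ.dvMap D :=
  ⟨m, n, m', n', h, hm, hn, rfl⟩

theorem dvMap_mono (σ : Subst) {D E : Set (Sym2 MV)} (h : D ⊆ E) : σ.dvMap D ⊆ σ.dvMap E := by
  rintro _ ⟨m, n, m', n', hmn, hm, hn, rfl⟩
  exact mk_mem_dvMap (h hmn) hm hn

theorem dvMap_id (D : Set (Sym2 MV)) : Subst.id.dvMap D = D := by
  refine Set.Subset.antisymm ?_ ?_
  · rintro _ ⟨m, n, _, _, hmn, hm, hn, rfl⟩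
    rw [appMV_id, Set.mem_singleton_iff] at hm hn
    rwa [hm, hn]
  · rintro ⟨m, n⟩ hmn
    exact mk_mem_dvMap hmn (by simp [appMV_id]) (by simp [appMV_id])

theorem dvMap_comp_subset (σ τ : Subst) (D : Set (Sym2 MV)) :
    (σ.comp τ).dvMap D ⊆ τ.dvMap (σ.dvMap D) := by
  rintro _ ⟨m, n, m', n', hmn, hm, hn, rfl⟩
  simp only [appMV_comp, Set.mem_iUnion₂] at hm hn
  obtain ⟨a, ha, hm⟩ := hm
  obtain ⟨b, hb, hn⟩ := hn
  exact mk_mem_dvMap (mk_mem_dvMap hmn ha hb) hm hn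

theorem legit_iff {σ : Subst} {Φ : Scheme} : σ.Legit Φ ↔ ∀ q ∈ σ.dvMap Φ.dv, ¬ q.IsDiag := by
  constructor
  · rintro h _ ⟨m, n, m', n', hmn, hm, hn, rfl⟩ (rfl : m' = n')
    exact Set.eq_empty_iff_forall_notMem.1 (h m n hmn) m' ⟨hm, hn⟩
  · intro h m n hmn
    refine Set.eq_empty_iff_forall_notMem.2 fun m' ⟨hm, hn⟩ => ?_
    exact h _ (mk_mem_dvMap hmn hm hn) (Sym2.mk_isDiag_iff.2 rfl)

end Subst

theorem MF.substMF_id (A : MF) : A.substMF Subst.id = A := by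
  induction A <;> simp_all [MF.substMF, Subst.id]

theorem MF.substMF_comp (σ τ : Subst) (A : MF) :
    A.substMF (σ.comp τ) = (A.substMF σ).substMF τ := by
  induction A <;> simp_all [MF.substMF, Subst.comp]

theorem Scheme.Inst.refl {Φ : Scheme} (hΦ : ∀ q ∈ Φ.dv, ¬ q.IsDiag) : Φ.Inst Φ := by
  refine ⟨Subst.id, Subst.legit_iff.2 ?_, ?_, (MF.substMF_id _).symm, (Subst.dvMap_id _).subset⟩
  · rwa [Subst.dvMap_id]
  · simp [funext MF.substMF_id]

theorem Scheme.Inst.trans {Φ Ψ Ξ : Scheme} (h₁ : Φ.Inst Ψ) (h₂ : Ψ.Inst Ξ) : Φ.Inst Ξ := by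
  obtain ⟨σ, -, hhyps, hconcl, hdv⟩ := h₁
  obtain ⟨τ, hτ, hhyps', hconcl', hdv'⟩ := h₂
  have dvMap_subset : (σ.comp τ).dvMap Φ.dv ⊆ τ.dvMap Ψ.dv :=
    (σ.dvMap_comp_subset τ Φ.dv).trans (τ.dvMap_mono hdv)
  refine ⟨σ.comp τ, ?_, ?_, ?_, dvMap_subset.trans hdv'⟩
  · exact Subst.legit_iff.2 fun q hq => Subst.legit_iff.1 hτ q (dvMap_subset hq)
  · rw [hhyps', hhyps, Finset.image_image]
    exact Finset.image_congr fun A _ => (MF.substMF_comp σ τ A).symm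
  · rw [hconcl', hconcl, MF.substMF_comp]

/-! ### Object-instances and truth -/

theorem MF.vars_osubst (τ : OSubst) (A : MF) :
    (A.osubst τ).vars = ⋃ m ∈ A.OC, τ.appVars m := by
  induction A with
  | phi k => simp [MF.osubst, MF.OC, OSubst.appVars]
  | eq a b => simp only [MF.osubst, MF.OC, FM.vars, OSubst.appVars, Set.biUnion_insert,
      Set.biUnion_singleton, Set.singleton_union]
  | imp A B ihA ihB => simp only [MF.osubst, MF.OC, FM.vars, ihA, ihB, Set.biUnion_union]
  | not _ ih => exact ih
  | all x A ih => simp [MF.osubst, MF.OC, FM.vars, OSubst.appVars, ih]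

/-- The composite object-substitution that applies the substitution `σ` first and `τ` second. -/
def OSubst.compSubst (τ : OSubst) (σ : Subst) : OSubst where
  vr i := τ.vr (σ.vr i)
  fm i := (σ.fm i).osubst τ

theorem OSubst.appVars_compSubst (τ : OSubst) (σ : Subst) (m : MV) :
    (τ.compSubst σ).appVars m = ⋃ n ∈ σ.appMV m, τ.appVars n := by
  cases m with
  | vr i => simp [OSubst.appVars, OSubst.compSubst, Subst.appMV]
  | fm i => exact MF.vars_osubst τ (σ.fm i)

theorem MF.osubst_compSubst (τ : OSubst) (σ : Subst) (A : MF) :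
    A.osubst (τ.compSubst σ) = (A.substMF σ).osubst τ := by
  induction A <;> simp_all [MF.osubst, MF.substMF, OSubst.compSubst]

theorem Scheme.IsTrue.of_inst {Φ Ψ : Scheme} (hΦ : Φ.IsTrue) (h : Φ.Inst Ψ) : Ψ.IsTrue := by
  obtain ⟨σ, -, hhyps, hconcl, hdv⟩ := h
  intro τ hτ D hD hvalid
  have legit : (τ.compSubst σ).Legit Φ := fun m n hmn => by
    rw [← Set.disjoint_iff_inter_eq_empty, OSubst.appVars_compSubst, OSubst.appVars_compSubst]
    simp only [Set.disjoint_iUnion₂_left, Set.disjoint_iUnion₂_right]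
    intro b hb a ha
    exact Set.disjoint_iff_inter_eq_empty.2 (hτ a b (hdv (Subst.mk_mem_dvMap hmn ha hb)))
  rw [hconcl, ← MF.osubst_compSubst]
  refine hΦ _ legit D hD fun A hA => ?_
  rw [MF.osubst_compSubst]
  exact hvalid _ (hhyps ▸ Finset.mem_image_of_mem _ hA)

theorem FM.eval_congr {D : Type} {A : FM} {ρ ρ' : ℕ → D} (h : Set.EqOn ρ ρ' A.vars) :
    A.eval ρ ↔ A.eval ρ' := by
  induction A generalizing ρ ρ' with
  | eq a b => simp [FM.eval, h (show a ∈ (FM.eq a b).vars from Or.inl rfl),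
      h (show b ∈ (FM.eq a b).vars from Or.inr rfl)]
  | imp A B ihA ihB =>
    exact imp_congr (ihA (h.mono Set.subset_union_left)) (ihB (h.mono Set.subset_union_right))
  | not A ih => exact not_congr (ih h)
  | all x A ih =>
    refine forall_congr' fun d => ih fun v hv => ?_
    simp only [Function.update_apply, h (Set.mem_insert_of_mem x hv)]

theorem FM.eval_update_of_notMem {D : Type} {A : FM} {x : ℕ} (hx : x ∉ A.vars) (ρ : ℕ → D)
    (d : D) : A.eval (Function.update ρ x d) ↔ A.eval ρ :=
  FM.eval_congr fun _ hv => Function.update_of_ne (ne_of_mem_of_not_mem hv hx) d ρ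

theorem OSubst.Legit.vr_ne {τ : OSubst} {Φ : Scheme} (hτ : τ.Legit Φ) {x y : ℕ}
    (h : s(MV.vr x, MV.vr y) ∈ Φ.dv) : τ.vr x ≠ τ.vr y := fun hxy =>
  (Set.singleton_nonempty (τ.vr x)).ne_empty
    (by simpa [OSubst.appVars, hxy] using hτ (.vr x) (.vr y) h)

theorem OSubst.Legit.vr_notMem_vars {τ : OSubst} {Φ : Scheme} (hτ : τ.Legit Φ) {x k : ℕ}
    (h : s(MV.vr x, MV.fm k) ∈ Φ.dv) : τ.vr x ∉ (τ.fm k).vars := by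
  simpa [OSubst.appVars] using hτ (.vr x) (.fm k) h

/-! ### Transforms of instances -/

theorem MF.transfAux_of_vr_notMem {A : MF} {j : ℕ} (hj : MV.vr j ∉ A.OC) (i : ℕ) (b : Bool) :
    A.transfAux i j b = A := by
  induction A generalizing b with
  | phi k => rfl
  | eq x y =>
    simp only [MF.OC, Set.mem_insert_iff, Set.mem_singleton_iff, MV.vr.injEq, not_or] at hj
    simp [MF.transfAux, Ne.symm hj.1, Ne.symm hj.2]
  | imp A B ihA ihB =>
    rw [MF.OC, Set.mem_union, not_or] at hj
    rw [MF.transfAux, ihA hj.1, ihB hj.2]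
  | not A ih => rw [MF.transfAux, ih hj]
  | all x A ih =>
    rw [MF.OC, Set.mem_insert_iff, MV.vr.injEq, not_or] at hj
    simp [MF.transfAux, ih hj.2, Ne.symm hj.1]

theorem MF.OC_transfAux_subset {i : ℕ} {A : MF} {b : Bool} {S : Set MV} (hA : A.OC ⊆ S)
    (hb : b = true → MV.vr i ∈ S) (j : ℕ) : (A.transfAux i j b).OC ⊆ S := by
  induction A generalizing b with
  | phi k => exact hA
  | eq x y =>
    simp only [MF.OC, MF.transfAux, Set.insert_subset_iff, Set.singleton_subset_iff] at hA ⊢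
    constructor <;> split_ifs <;> tauto
  | imp A B ihA ihB =>
    rw [MF.OC, Set.union_subset_iff] at hA
    exact Set.union_subset (ihA hA.1 hb) (ihB hA.2 hb)
  | not A ih => exact ih hA hb
  | all x A ih =>
    rw [MF.OC, Set.insert_subset_iff] at hA
    refine Set.insert_subset ?_ (ih hA.2 fun h => ?_)
    · split_ifs <;> tauto
    · rcases Bool.or_eq_true _ _ ▸ h with h | h
      · exact hb h
      · exact of_decide_eq_true h ▸ hA.1

/-- `A.UniformScope D F L` says that, if `A` is placed in the scope of the quantifiers over the
variables in `L`, then, up to the DV conditions in `D`, a variable lies only in the scope of its own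
quantifiers and the formula metavariable `φ_k` lies in the scope of exactly the quantifiers over the
variables in `F k`. -/
def MF.UniformScope (D : Set (Sym2 MV)) (F : ℕ → Finset ℕ) : MF → Finset ℕ → Prop
  | .phi k, L => ∀ x, (x ∈ L ↔ x ∈ F k) ∨ s(MV.vr x, MV.fm k) ∈ D
  | .eq y z, L => (∀ x ∈ L, x = y ∨ s(MV.vr x, MV.vr y) ∈ D) ∧
      ∀ x ∈ L, x = z ∨ s(MV.vr x, MV.vr z) ∈ D
  | .imp A B, L => A.UniformScope D F L ∧ B.UniformScope D F L
  | .not A, L => A.UniformScope D F L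
  | .all y A, L => (∀ x ∈ L, x = y ∨ s(MV.vr x, MV.vr y) ∈ D) ∧ A.UniformScope D F (insert y L)

/-- The substitution that agrees with `σ` on variables and sends `φ_k` to the image under `σ`
followed by the `(i, j)`-transform, this image being regarded as lying in the scope of the
quantifiers over the images of the variables in `F k`. -/
def Subst.transf (σ : Subst) (F : ℕ → Finset ℕ) (i j : ℕ) : Subst where
  vr := σ.vr
  fm k := (σ.fm k).transfAux i j (decide (i ∈ (F k).image σ.vr))
  finVr := σ.finVr
  finFm := σ.finFm.subset fun k hk h => hk (by rw [h, MF.transfAux])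

theorem MF.transfAux_substMF {σ : Subst} {D : Set (Sym2 MV)} {F : ℕ → Finset ℕ} {i j : ℕ}
    (hij : s(MV.vr i, MV.vr j) ∉ σ.dvMap D) {A : MF} {L : Finset ℕ} (hA : A.UniformScope D F L) :
    (A.substMF σ).transfAux i j (decide (i ∈ L.image σ.vr)) = A.substMF (σ.transf F i j) := by
  have vr_fixed {L : Finset ℕ} {y : ℕ} (hy : ∀ x ∈ L, x = y ∨ s(MV.vr x, MV.vr y) ∈ D) :
      (if decide (i ∈ L.image σ.vr) = true ∧ σ.vr y = j then i else σ.vr y) = σ.vr y := by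
    refine ite_eq_right_iff.2 fun ⟨hi, hj⟩ => ?_
    obtain ⟨x, hx, rfl⟩ := Finset.mem_image.1 (of_decide_eq_true hi)
    rcases hy x hx with rfl | hxy
    · rfl
    · exact absurd (Subst.mk_mem_dvMap hxy rfl (congrArg MV.vr hj.symm)) hij
  induction A generalizing L with
  | phi k =>
    by_cases hj : MV.vr j ∈ (σ.fm k).OC
    · have same_scope : i ∈ L.image σ.vr ↔ i ∈ (F k).image σ.vr := by
        simp only [Finset.mem_image]
        refine exists_congr fun x => and_congr_left fun hx => (hA x).resolve_right fun hxk => ?_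
        exact hij (Subst.mk_mem_dvMap hxk (congrArg MV.vr hx.symm) hj)
      simp only [MF.substMF, Subst.transf, same_scope]
    · simp only [MF.substMF, Subst.transf, MF.transfAux_of_vr_notMem hj]
  | eq y z => simp only [MF.substMF, MF.transfAux, vr_fixed hA.1, vr_fixed hA.2, Subst.transf]
  | imp A B ihA ihB => simp only [MF.substMF, MF.transfAux, ihA hA.1, ihB hA.2]
  | not A ih => simp only [MF.substMF, MF.transfAux, ih hA]
  | all y A ih =>
    have scope_insert : (decide (i ∈ L.image σ.vr) || decide (σ.vr y = i)) =
        decide (i ∈ (insert y L).image σ.vr) := by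
      rw [← Bool.decide_or]
      simp only [Finset.image_insert, Finset.mem_insert, or_comm, eq_comm]
    simp only [MF.substMF, MF.transfAux, vr_fixed hA.1, scope_insert, ih hA.2]
    rfl

/-- A scheme is uniformly scoped if no metavariable is disjoint from itself, its metaformulas are
uniformly scoped with respect to a common assignment `F` of scopes to formula metavariables, and a
metavariable that is disjoint from `φ_k` is also disjoint from the variables in `F k`. The last
condition is there because a transform may introduce the image of such a variable into the image
of `φ_k`. -/
structure Scheme.UniformScope (Φ : Scheme) (F : ℕ → Finset ℕ) : Prop where
  hyps : ∀ A ∈ Φ.hyps, A.UniformScope Φ.dv F ∅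
  concl : Φ.concl.UniformScope Φ.dv F ∅
  irrefl : ∀ q ∈ Φ.dv, ¬ q.IsDiag
  dv_scope : ∀ k n, s(MV.fm k, n) ∈ Φ.dv → ∀ x ∈ F k, s(MV.vr x, n) ∈ Φ.dv

namespace Scheme.UniformScope

variable {Φ : Scheme} {F : ℕ → Finset ℕ}

theorem exists_mem_appMV_of_transf (hΦ : Φ.UniformScope F) {σ : Subst} {i j : ℕ} {m n m' : MV}
    (hmn : s(m, n) ∈ Φ.dv) (hm' : m' ∈ (σ.transf F i j).appMV m) :
    ∃ l, s(l, n) ∈ Φ.dv ∧ m' ∈ σ.appMV l := by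
  cases m with
  | vr x => exact ⟨.vr x, hmn, hm'⟩
  | fm k =>
    refine MF.OC_transfAux_subset (S := {a | ∃ l, s(l, n) ∈ Φ.dv ∧ a ∈ σ.appMV l})
      (fun a ha => ⟨.fm k, hmn, ha⟩) (fun hi => ?_) j hm'
    obtain ⟨x, hx, rfl⟩ := Finset.mem_image.1 (of_decide_eq_true hi)
    exact ⟨.vr x, hΦ.dv_scope k n hmn x hx, rfl⟩

theorem dvMap_transf_subset (hΦ : Φ.UniformScope F) (σ : Subst) (i j : ℕ) :
    (σ.transf F i j).dvMap Φ.dv ⊆ σ.dvMap Φ.dv := by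
  rintro _ ⟨m, n, m', n', hmn, hm', hn', rfl⟩
  obtain ⟨k, hkn, hk⟩ := hΦ.exists_mem_appMV_of_transf hmn hm'
  obtain ⟨l, hlk, hl⟩ := hΦ.exists_mem_appMV_of_transf (Sym2.eq_swap ▸ hkn) hn'
  exact Subst.mk_mem_dvMap (Sym2.eq_swap ▸ hlk) hk hl

end Scheme.UniformScope

/-! ### Supertruth -/

theorem Scheme.Inst.transform {Φ Ψ : Scheme} {F : ℕ → Finset ℕ} (h : Φ.Inst Ψ)
    (hΦ : Φ.UniformScope F) {i j : ℕ} (hij : Ψ.TLegit i j) : Φ.Inst (Ψ.transform i j) := by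
  obtain ⟨σ, hσ, hhyps, hconcl, hdv⟩ := h
  have dvMap_subset := hΦ.dvMap_transf_subset σ i j
  have transform_substMF {A : MF} (hA : A.UniformScope Φ.dv F ∅) :
      (A.substMF σ).transform i j = A.substMF (σ.transf F i j) := by
    simpa [MF.transform] using MF.transfAux_substMF (fun h => hij (hdv h)) hA
  refine ⟨σ.transf F i j, ?_, ?_, ?_, dvMap_subset.trans hdv⟩
  · exact Subst.legit_iff.2 fun q hq => Subst.legit_iff.1 hσ q (dvMap_subset hq)
  · rw [Scheme.transform, hhyps, Finset.image_image]
    exact Finset.image_congr fun A hA => transform_substMF (hΦ.hyps A hA)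
  · rw [Scheme.transform, hconcl, transform_substMF hΦ.concl]

theorem Scheme.preST_of_forall_inst {Φ : Scheme} (hdv : ∀ q ∈ Φ.dv, ¬ q.IsDiag)
    (h : ∀ Ψ, Φ.Inst Ψ → ∀ i j, Ψ.TLegit i j → (Ψ.transform i j).IsTrue) : Φ.PreST := by
  rintro Ψ (rfl | hΨ)
  · exact h Ψ (.refl hdv)
  · exact h Ψ hΨ

theorem Scheme.PreST.of_inst {Φ Ψ : Scheme} (hΦ : Φ.PreST) (h : Φ.Inst Ψ) : Ψ.PreST := by
  rintro Ξ (rfl | hΞ)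
  · exact hΦ Ξ (.inr h)
  · exact hΦ Ξ (.inr (h.trans hΞ))

theorem Scheme.IsTrue.of_forall_hyps {Φ : Scheme} (hΦ : Φ.IsTrue)
    (hhyps : ∀ A ∈ Φ.hyps, Scheme.IsTrue ⟨∅, A, Φ.dv⟩) (H : Finset MF) :
    Scheme.IsTrue ⟨H, Φ.concl, Φ.dv⟩ :=
  fun τ hτ D hD _ => hΦ τ hτ D hD fun A hA => hhyps A hA τ hτ D hD (by simp)

theorem Scheme.PreST.supertrue {Φ : Scheme} (hΦ : Φ.PreST) : Φ.Supertrue := by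
  intro Ψ hΨ hhyps Ξ hΞ i j hij
  have preST_Ψ : Ψ.PreST := by
    rcases hΨ with rfl | hΨ
    · exact hΦ
    · exact hΦ.of_inst hΨ
  rcases hΞ with rfl | ⟨σ, hσ, -, hconcl, hdv⟩
  · refine (preST_Ψ Ψ (.inl rfl) i j hij).of_forall_hyps (fun B hB => ?_) _
    obtain ⟨A, hA, rfl⟩ := Finset.mem_image.1 hB
    exact hhyps A hA _ (.inl rfl) i j hij
  · have inst : Ψ.Inst ⟨Ψ.hyps.image (MF.substMF σ), Ξ.concl, Ξ.dv⟩ := ⟨σ, hσ, rfl, hconcl, hdv⟩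
    refine (preST_Ψ _ (.inr inst) i j hij).of_forall_hyps (fun B hB => ?_) _
    obtain ⟨A', hA', rfl⟩ := Finset.mem_image.1 hB
    obtain ⟨A, hA, rfl⟩ := Finset.mem_image.1 hA'
    exact hhyps A hA ⟨∅, A.substMF σ, Ξ.dv⟩ (.inr ⟨σ, hσ, rfl, rfl, hdv⟩) i j hij

theorem Scheme.IsTrue.supertrue {Φ : Scheme} {F : ℕ → Finset ℕ} (htrue : Φ.IsTrue)
    (hF : Φ.UniformScope F) : Φ.Supertrue :=
  (preST_of_forall_inst hF.irrefl fun _ hΨ _ _ hij =>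
    htrue.of_inst (hΨ.transform hF hij)).supertrue

/-! ### The axiom schemes -/

theorem uniformScope_ALLdistr : ax_ALLdistr.UniformScope fun _ => {0} := by
  constructor <;> simp [ax_ALLdistr, MF.UniformScope]

theorem uniformScope_modalD : ax_modalD.UniformScope fun _ => {0} := by
  constructor <;> simp [ax_modalD, MF.UniformScope]

theorem uniformScope_modal4 : ax_modal4.UniformScope fun _ => {0} := by
  constructor <;> simp [ax_modal4, MF.UniformScope]

theorem uniformScope_modal5 : ax_modal5.UniformScope fun _ => {0} := by
  constructor <;> simp [ax_modal5, MF.UniformScope]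

theorem uniformScope_vacGen : ax_vacGen.UniformScope fun _ => ∅ := by
  constructor <;> simp [ax_vacGen, MF.UniformScope, em']

theorem uniformScope_denot : ax_denot.UniformScope fun _ => ∅ := by
  constructor <;> simp [ax_denot, MF.UniformScope]

theorem uniformScope_subst : ax_subst.UniformScope fun _ => {0} := by
  constructor <;> simp [ax_subst, MF.UniformScope]

theorem isTrue_ALLdistr : ax_ALLdistr.IsTrue :=
  fun _ _ _ _ _ _ himp hφ d => himp d (hφ d)

theorem isTrue_modalD : ax_modalD.IsTrue :=
  fun _ _ _ ⟨d⟩ _ _ hnot hφ => hnot d (hφ d)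

theorem isTrue_modal4 : ax_modal4.IsTrue := by
  intro τ _ D _ _ ρ
  simp [ax_modal4, MF.osubst, FM.eval]

theorem isTrue_modal5 : ax_modal5.IsTrue := by
  intro τ _ D _ _ ρ
  simp [ax_modal5, MF.osubst, FM.eval]

theorem isTrue_vacGen : ax_vacGen.IsTrue := by
  intro τ hτ D _ _ ρ hφ d
  exact (FM.eval_update_of_notMem (hτ.vr_notMem_vars rfl) ρ d).2 hφ

theorem isTrue_denot : ax_denot.IsTrue := by
  intro τ hτ D _ _ ρ
  have hne : τ.vr 0 ≠ τ.vr 1 := hτ.vr_ne rfl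
  simp [ax_denot, MF.osubst, FM.eval, hne]

theorem isTrue_subst : ax_subst.IsTrue := by
  intro τ hτ D _ _ ρ
  have hne : τ.vr 1 ≠ τ.vr 0 := (hτ.vr_ne (.inl rfl)).symm
  simp [ax_subst, MF.osubst, FM.eval, hne]

theorem isTrue_genEq : ax_genEq.IsTrue := by
  intro τ _ D _ _ ρ
  simp only [ax_genEq, MF.osubst, FM.eval, Function.update_self]
  intro hxy hxz hyz d
  have vr_ne {y : ℕ} (hy : ¬ ∀ d, d = Function.update ρ (τ.vr 0) d y) : y ≠ τ.vr 0 := by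
    rintro rfl
    simp at hy
  rwa [Function.update_of_ne (vr_ne hxy), Function.update_of_ne (vr_ne hxz)]

theorem isTrue_transform_of_genEq_inst {Ψ : Scheme} (hΨ : ax_genEq.Inst Ψ) (i j : ℕ) :
    (Ψ.transform i j).IsTrue := by
  obtain ⟨σ, hσ, hhyps, hconcl, hdv⟩ := hΨ
  by_cases hren : σ.vr 0 = i ∧ (σ.vr 1 = j ∨ σ.vr 2 = j)
  · obtain ⟨rfl, hren⟩ := hren
    intro τ _ D _ _ ρ
    simp only [Scheme.transform, MF.transform, hconcl, ax_genEq]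
    rcases hren with rfl | rfl <;> simp [MF.substMF, MF.transfAux, MF.osubst, FM.eval]
  · have hconcl_eq : Ψ.concl.transform i j = Ψ.concl := by
      have hy : ¬ (σ.vr 0 = i ∧ σ.vr 1 = j) := fun h => hren ⟨h.1, .inl h.2⟩
      have hz : ¬ (σ.vr 0 = i ∧ σ.vr 2 = j) := fun h => hren ⟨h.1, .inr h.2⟩
      have hx : (if σ.vr 0 = i ∧ σ.vr 0 = j then i else σ.vr 0) = σ.vr 0 :=
        ite_eq_right_iff.2 fun h => h.1.symm
      simp [hconcl, ax_genEq, MF.substMF, MF.transform, MF.transfAux, hx, hy, hz]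
    refine isTrue_genEq.of_inst ⟨σ, hσ, ?_, hconcl_eq.trans hconcl, hdv⟩
    simp [Scheme.transform, hhyps, ax_genEq]

theorem preST_genEq : ax_genEq.PreST :=
  Scheme.preST_of_forall_inst (by simp [ax_genEq]) fun _ hΨ i j _ =>
    isTrue_transform_of_genEq_inst hΨ i j

/-- The schemes ALLdistr, modalD, modal4, modal5, vacGen, denot, subst,
and genEq are supertrue. -/
theorem axioms_supertrue :
    ax_ALLdistr.Supertrue ∧ ax_modalD.Supertrue ∧ ax_modal4.Supertrue ∧
    ax_modal5.Supertrue ∧ ax_vacGen.Supertrue ∧ ax_denot.Supertrue ∧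
    ax_subst.Supertrue ∧ ax_genEq.Supertrue := by
  exact ⟨isTrue_ALLdistr.supertrue uniformScope_ALLdistr,
    isTrue_modalD.supertrue uniformScope_modalD,
    isTrue_modal4.supertrue uniformScope_modal4,
    isTrue_modal5.supertrue uniformScope_modal5,
    isTrue_vacGen.supertrue uniformScope_vacGen,
    isTrue_denot.supertrue uniformScope_denot,
    isTrue_subst.supertrue uniformScope_subst,
    preST_genEq.supertrue⟩
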